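/- For all integers N ≥ 0 and h ≥ 1, the odd q-super Catalan numbers satisfy the recurrence C_{N+h,N}(q) = q^h A_{N+h,N}(q) + Σ_{k=0}^{⌊(h-1)/2⌋} C_{k,N}(q) · Σ_{j=k}^{h-k-1} q^{k(N+k+1) + j(N+j+1)} · [h choose 2k+1] · [h-2k-1 choose j-k]. -/

import Mathlib

open Finset

noncomputable section

/-- The variable `q`, as a rational function over `ℚ`. -/
def q : RatFunc ℚ := RatFunc.X

/-- The `q`-integer `[n] = (1 - q^n)/(1 - q)`. -/
def qint (n : ℕ) : RatFunc ℚ := (1 - q ^ n) / (1 - q)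

/-- The `q`-factorial `[n]! = [1][2]⋯[n]`, with `[0]! = 1`. -/
def qfact (n : ℕ) : RatFunc ℚ := ∏ i ∈ Finset.range n, qint (i + 1)

/-- The Gaussian (q-binomial) coefficient `[N choose K]`, equal to
`[N]!/([K]![N-K]!)` if `0 ≤ K ≤ N`, and `0` otherwise. -/
def qbinom (N K : ℤ) : RatFunc ℚ :=
  if 0 ≤ K ∧ K ≤ N then qfact N.toNat / (qfact K.toNat * qfact (N - K).toNat) else 0

/-- The `q`-super Catalan number `A_{m,n}(q) = [2m]! [2n]! / ([m+n]! [m]! [n]!)`. -/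
def A (m n : ℕ) : RatFunc ℚ :=
  qfact (2 * m) * qfact (2 * n) / (qfact (m + n) * qfact m * qfact n)

/-- The odd `q`-super Catalan number
`C_{m,n}(q) = [2m+1]! [2n]! / ([m+n+1]! [m]! [n]!)`. -/
def C (m n : ℕ) : RatFunc ℚ :=
  qfact (2 * m + 1) * qfact (2 * n) / (qfact (m + n + 1) * qfact m * qfact n)

theorem one_sub_q_pow_ne_zero {n : ℕ} (hn : n ≠ 0) : (1 : RatFunc ℚ) - q ^ n ≠ 0 := by
  intro h
  have hX : (Polynomial.X : Polynomial ℚ) ^ n = 1 := by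
    apply RatFunc.algebraMap_injective ℚ
    rw [map_pow, map_one, RatFunc.algebraMap_X]
    exact (sub_eq_zero.mp h).symm
  have hdeg := congrArg Polynomial.natDegree hX
  simp [hn] at hdeg

theorem one_sub_q_ne_zero : (1 : RatFunc ℚ) - q ≠ 0 := by
  simpa using one_sub_q_pow_ne_zero one_ne_zero

theorem qint_ne_zero {n : ℕ} (hn : n ≠ 0) : qint n ≠ 0 :=
  div_ne_zero (one_sub_q_pow_ne_zero hn) one_sub_q_ne_zero

theorem qfact_ne_zero (n : ℕ) : qfact n ≠ 0 :=
  Finset.prod_ne_zero_iff.mpr fun i _ => qint_ne_zero i.succ_ne_zero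

theorem qfact_zero : qfact 0 = 1 := rfl

theorem qfact_succ (n : ℕ) : qfact (n + 1) = qfact n * qint (n + 1) :=
  Finset.prod_range_succ _ _

theorem qint_add (m n : ℕ) : qint (m + n) = q ^ m * qint n + qint m := by
  unfold qint
  rw [pow_add, ← mul_div_assoc, ← add_div]
  ring

theorem qbinom_natCast_add (a b : ℕ) :
    qbinom ((a + b : ℕ) : ℤ) a = qfact (a + b) / (qfact a * qfact b) := by
  have hb : (((a + b : ℕ) : ℤ) - a).toNat = b := by omega
  rw [qbinom, if_pos (by omega), hb, Int.toNat_natCast, Int.toNat_natCast]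

theorem qbinom_natCast_of_le {n k : ℕ} (hk : k ≤ n) :
    qbinom n k = qfact n / (qfact k * qfact (n - k)) := by
  obtain ⟨b, rfl⟩ := Nat.exists_eq_add_of_le hk
  rw [qbinom_natCast_add, Nat.add_sub_cancel_left]

theorem qbinom_natCast_of_lt {n k : ℕ} (hk : n < k) : qbinom n k = 0 :=
  if_neg (by omega)

theorem qbinom_natCast_zero (n : ℕ) : qbinom n (0 : ℕ) = 1 := by
  rw [qbinom_natCast_of_le n.zero_le, qfact_zero, one_mul, Nat.sub_zero,
    div_self (qfact_ne_zero n)]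

/-- The `q`-Pascal rule. -/
theorem qbinom_succ_succ (n k : ℕ) :
    qbinom (n + 1 : ℕ) (k + 1 : ℕ) = q ^ (n - k) * qbinom n k + qbinom n (k + 1 : ℕ) := by
  rcases lt_trichotomy n k with hlt | rfl | hgt
  · rw [qbinom_natCast_of_lt hlt, qbinom_natCast_of_lt (by omega : n + 1 < k + 1),
      qbinom_natCast_of_lt (by omega : n < k + 1)]
    simp
  · rw [qbinom_natCast_of_lt n.lt_succ_self, qbinom_natCast_of_le le_rfl,
      qbinom_natCast_of_le le_rfl]
    simp [qfact_zero, qfact_ne_zero]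
  · obtain ⟨d, rfl⟩ := Nat.exists_eq_add_of_lt hgt
    rw [qbinom_natCast_of_le (by omega), qbinom_natCast_of_le (by omega),
      qbinom_natCast_of_le (by omega), show k + d + 1 + 1 - (k + 1) = d + 1 by omega,
      show k + d + 1 - k = d + 1 by omega, show k + d + 1 - (k + 1) = d by omega,
      qfact_succ (k + d + 1), qfact_succ k, qfact_succ d,
      show k + d + 1 + 1 = (d + 1) + (k + 1) by omega, qint_add]
    have := qfact_ne_zero k
    have := qfact_ne_zero d
    have := qint_ne_zero k.succ_ne_zero
    have := qint_ne_zero d.succ_ne_zero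
    field_simp

/-- The `q`-Vandermonde convolution. -/
theorem sum_antidiagonal_qbinom (m n r : ℕ) :
    ∑ p ∈ antidiagonal r, q ^ (p.1 * (n - p.2)) * qbinom m p.1 * qbinom n p.2 =
      qbinom (m + n : ℕ) r := by
  induction m generalizing r with
  | zero =>
    rw [Finset.sum_eq_single (0, r)]
    · simp only [zero_mul, pow_zero, one_mul, Nat.zero_add]
      rw [qbinom_natCast_zero, one_mul]
    · rintro ⟨i, l⟩ hp hne
      have hi : 0 < i := by
        rcases Nat.eq_zero_or_pos i with rfl | hi
        · simp_all
        · exact hi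
      rw [qbinom_natCast_of_lt hi]
      ring
    · simp
  | succ m ih =>
    cases r with
    | zero =>
      rw [Finset.Nat.antidiagonal_zero, Finset.sum_singleton]
      dsimp only
      simp only [qbinom_natCast_zero, zero_mul, pow_zero, mul_one]
    | succ r =>
      rw [show m + 1 + n = m + n + 1 by omega, qbinom_succ_succ, ← ih, ← ih,
        Finset.Nat.sum_antidiagonal_succ, Finset.Nat.sum_antidiagonal_succ, Finset.mul_sum,
        qbinom_natCast_zero, qbinom_natCast_zero, add_left_comm, ← Finset.sum_add_distrib]
      congr 1
      refine Finset.sum_congr rfl ?_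
      rintro ⟨i, l⟩ hp
      rw [HasAntidiagonal.mem_antidiagonal] at hp
      dsimp only at hp ⊢
      rw [qbinom_succ_succ]
      rcases lt_or_ge m i with hi | hi
      · rw [qbinom_natCast_of_lt hi]
        ring
      rcases lt_or_ge n l with hl | hl
      · rw [qbinom_natCast_of_lt hl]
        ring
      have hpow : q ^ ((i + 1) * (n - l)) * q ^ (m - i) =
          q ^ (m + n - r) * q ^ (i * (n - l)) := by
        rw [← pow_add, ← pow_add, add_one_mul, show m + n - r = (n - l) + (m - i) by omega]
        congr 1
        omega
      linear_combination (qbinom m i * qbinom n l) * hpow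

theorem sum_range_qbinom (m n r : ℕ) :
    ∑ k ∈ range (r + 1), q ^ (k * (n - (r - k))) * qbinom m k * qbinom n (r - k : ℕ) =
      qbinom (m + n : ℕ) r := by
  rw [← sum_antidiagonal_qbinom, Finset.Nat.sum_antidiagonal_eq_sum_range_succ
    fun i l => q ^ (i * (n - l)) * qbinom m i * qbinom n l]

/-- The summand of the recurrence, expressed through the summand of a `q`-Vandermonde
convolution in `k`. -/
theorem C_mul_qbinom_mul_qbinom (N j k e : ℕ) (hk : k ≤ j) (hke : k ≤ e) :
    C k N * (qbinom ((j + e + 1 : ℕ) : ℤ) (2 * (k : ℤ) + 1) *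
        qbinom (((j + e + 1 : ℕ) : ℤ) - 2 * k - 1) ((j : ℤ) - k)) =
      qfact (2 * N) * qfact (j + e + 1) / (qfact N * qfact j * qfact (N + e + 1)) *
        (qbinom j k * qbinom (N + e + 1 : ℕ) (e - k : ℕ)) := by
  obtain ⟨a, rfl⟩ := Nat.exists_eq_add_of_le hk
  obtain ⟨b, rfl⟩ := Nat.exists_eq_add_of_le hke
  rw [show (((k + a + (k + b) + 1 : ℕ) : ℤ) - 2 * k - 1) = ((a + b : ℕ) : ℤ) by push_cast; ring,
    show (((k + a : ℕ) : ℤ) - k) = (a : ℤ) by push_cast; ring,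
    show (2 * (k : ℤ) + 1) = ((2 * k + 1 : ℕ) : ℤ) by push_cast; ring,
    show k + a + (k + b) + 1 = (2 * k + 1) + (a + b) by ring,
    show N + (k + b) + 1 = b + (k + N + 1) by ring, Nat.add_sub_cancel_left]
  simp only [qbinom_natCast_add, C]
  field_simp [qfact_ne_zero]

theorem sum_C_mul_qbinom (N H : ℕ) :
    ∑ k ∈ Finset.range (H / 2 + 1), C k N *
        ∑ j ∈ Finset.Icc k (H + 1 - k - 1), q ^ (k * (N + k + 1) + j * (N + j + 1)) *
          qbinom ((H + 1 : ℕ) : ℤ) (2 * (k : ℤ) + 1) *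
          qbinom (((H + 1 : ℕ) : ℤ) - 2 * k - 1) ((j : ℤ) - k) =
      qfact (2 * N) * qfact (H + 1) / (qfact N * qfact (N + H + 1)) *
        qbinom (N + H + 1 + (N + H + 1) : ℕ) H := by
  simp only [Finset.mul_sum]
  rw [Finset.sum_comm' (t' := range (H + 1)) (s' := fun j => {k ∈ range (H - j + 1) | k ≤ j})
    (by intro k j; simp only [mem_range, mem_Icc, mem_filter]; omega),
    ← sum_range_qbinom, Finset.mul_sum]
  refine Finset.sum_congr rfl fun j hj => ?_
  obtain ⟨e, rfl⟩ := Nat.exists_eq_add_of_le (Nat.lt_succ_iff.mp (mem_range.mp hj))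
  rw [Nat.add_sub_cancel_left]
  calc
    _ = ∑ k ∈ range (e + 1) with k ≤ j,
          q ^ (j * (N + j + 1)) * (qfact (2 * N) * qfact (j + e + 1) /
            (qfact N * qfact j * qfact (N + e + 1))) *
          (q ^ (k * (N + e + 1 - (e - k))) * qbinom j k * qbinom (N + e + 1 : ℕ) (e - k : ℕ)) := by
      refine Finset.sum_congr rfl fun k hk => ?_
      simp only [mem_filter, mem_range] at hk
      have hC := C_mul_qbinom_mul_qbinom N j k e hk.2 (by omega)
      rw [show N + e + 1 - (e - k) = N + k + 1 by omega, pow_add]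
      linear_combination q ^ (k * (N + k + 1)) * q ^ (j * (N + j + 1)) * hC
    _ = q ^ (j * (N + j + 1)) * (qfact (2 * N) * qfact (j + e + 1) /
            (qfact N * qfact j * qfact (N + e + 1))) * qbinom (j + (N + e + 1) : ℕ) e := by
      rw [← sum_range_qbinom, Finset.mul_sum]
      refine Finset.sum_subset (filter_subset _ _) fun k hk hkj => ?_
      have hlt : j < k := by simp_all
      rw [qbinom_natCast_of_lt hlt]
      ring
    _ = _ := by
      rw [qbinom_natCast_of_le (by omega), qbinom_natCast_of_le (by omega),
        qbinom_natCast_of_le (by omega), show j + (N + e + 1) - e = N + j + 1 by omega,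
        show j + (N + e + 1) = N + (j + e) + 1 by omega,
        show N + (j + e) + 1 - e = N + j + 1 by omega,
        show N + (j + e) + 1 - j = N + e + 1 by omega]
      field_simp [qfact_ne_zero]

/-- For all integers `N ≥ 0` and `h ≥ 1`,
`C_{N+h,N}(q) = q^h A_{N+h,N}(q) + Σ_{k=0}^{⌊(h-1)/2⌋} C_{k,N}(q)
  Σ_{j=k}^{h-k-1} q^{k(N+k+1)+j(N+j+1)} [h choose 2k+1] [h-2k-1 choose j-k]`. -/
theorem forward_recurrence (N h : ℕ) (hh : 1 ≤ h) :
    C (N + h) N =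
      q ^ h * A (N + h) N +
        ∑ k ∈ Finset.range ((h - 1) / 2 + 1),
          C k N *
            ∑ j ∈ Finset.Icc k (h - k - 1),
              q ^ (k * (N + k + 1) + j * (N + j + 1)) *
                qbinom (h : ℤ) (2 * (k : ℤ) + 1) *
                qbinom ((h : ℤ) - 2 * k - 1) ((j : ℤ) - k) := by
  obtain ⟨H, rfl⟩ := Nat.exists_eq_add_of_le' hh
  rw [Nat.add_sub_cancel, sum_C_mul_qbinom, qbinom_natCast_of_le (by omega),
    show N + H + 1 + (N + H + 1) - H = N + (H + 1) + N + 1 by omega,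
    show N + H + 1 + (N + H + 1) = 2 * (N + (H + 1)) by omega, C, A, qfact_succ H,
    qfact_succ (2 * (N + (H + 1))), qfact_succ (N + (H + 1) + N),
    show 2 * (N + (H + 1)) + 1 = (H + 1) + (N + (H + 1) + N + 1) by omega, qint_add,
    show N + H + 1 = N + (H + 1) by omega]
  have := qint_ne_zero (N + (H + 1) + N).succ_ne_zero
  field_simp [qfact_ne_zero]

end
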